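/- arXiv:1806.06971 — 5 statements merged into one kernel-verified Lean document; each statement's English description precedes it below -/
import Mathlib

section
/- The form b̃ on V[t,t⁻¹] is anisotropic: for every v ∈ V[t,t⁻¹], if b̃(v,v) = 0 then v = 0. Equivalently, if v = ∑_i t^i v_i is nonzero then there exists n ∈ ℤ with ∑_i b(v_{i−n}, v_i) ≠ 0. -/
open Finsupp

variable (k : Type*) [Field k] (V : Type*) [AddCommGroup V] [Module k V]

/-- The coefficient of `tⁿ` of `b̃(v,w) = ∑ₙ tⁿ (∑ᵢ b(v_{i-n}, w_i))`. -/
noncomputable def Btilde (b : LinearMap.BilinForm k V) (n : ℤ) (v w : ℤ →₀ V) : k :=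
  w.sum fun i wi => b (v (i - n)) wi

theorem btilde_eq_sum (b : LinearMap.BilinForm k V) (n : ℤ) (v w : ℤ →₀ V) (T : Finset ℤ)
    (hT : w.support ⊆ T) : Btilde k V b n v w = ∑ i ∈ T, b (v (i - n)) (w i) := by
  unfold Btilde
  exact Finsupp.sum_of_support_subset _ hT _ (by simp)

theorem btilde_sub_right (b : LinearMap.BilinForm k V) (n : ℤ) (u v w : ℤ →₀ V) :
    Btilde k V b n u (v - w) = Btilde k V b n u v - Btilde k V b n u w := by
  unfold Btilde
  exact Finsupp.sum_sub_index (by simp)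

theorem btilde_sub_left (b : LinearMap.BilinForm k V) (n : ℤ) (u v w : ℤ →₀ V) :
    Btilde k V b n (u - v) w = Btilde k V b n u w - Btilde k V b n v w := by
  simp [Btilde, Finsupp.sum, Finset.sum_sub_distrib]

/-- Multiplication by `t`. -/
noncomputable def tshift (w : ℤ →₀ V) : ℤ →₀ V := w.mapDomain (fun i => i + 1)

theorem tshift_apply (w : ℤ →₀ V) (i : ℤ) : tshift V w i = w (i - 1) := by
  have h := Finsupp.mapDomain_apply (f := fun i : ℤ => i + 1)
    (fun a b h => by simpa using h) w (i - 1)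
  simpa [tshift] using h

theorem btilde_shift_right (b : LinearMap.BilinForm k V) (n : ℤ) (v w : ℤ →₀ V) :
    Btilde k V b n v (tshift V w) = Btilde k V b (n - 1) v w := by
  unfold Btilde tshift
  rw [Finsupp.sum_mapDomain_index (by simp) (by simp)]
  refine Finsupp.sum_congr fun i _ => ?_
  rw [show i + 1 - n = i - (n - 1) by ring]

theorem btilde_shift_left (b : LinearMap.BilinForm k V) (n : ℤ) (v w : ℤ →₀ V) :
    Btilde k V b n (tshift V v) w = Btilde k V b (n + 1) v w := by
  unfold Btilde
  refine Finsupp.sum_congr fun i _ => ?_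
  rw [tshift_apply, show i - n - 1 = i - (n + 1) by ring]

theorem btilde_total (b : LinearMap.BilinForm k V) (v : ℤ →₀ V) (a : ℤ) (N : ℕ)
    (hv : v.support ⊆ Finset.Ico a (a + N)) :
    ∑ n ∈ Finset.Icc (-N : ℤ) N, Btilde k V b n v v
      = b (∑ i ∈ Finset.Ico a (a + N), v i) (∑ i ∈ Finset.Ico a (a + N), v i) := by
  simp_rw [btilde_eq_sum k V b _ v v _ hv]
  rw [Finset.sum_comm, map_sum]
  refine Finset.sum_congr rfl fun i hi => ?_
  rw [Finset.mem_Ico] at hi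
  have h : ∑ n ∈ Finset.Icc (-N : ℤ) N, v (i - n) = ∑ i ∈ Finset.Ico a (a + N), v i := by
    have h1 : ∑ n ∈ Finset.Icc (-N : ℤ) N, v (i - n)
        = ∑ j ∈ Finset.Icc (i - N) (i + N), v j := by
      refine Finset.sum_nbij' (fun n => i - n) (fun j => i - j) ?_ ?_ ?_ ?_ ?_
      all_goals intro x hx
      all_goals simp only [Finset.mem_Icc] at *
      all_goals first | omega | rfl
    rw [h1]
    symm
    apply Finset.sum_subset
    · intro j hj
      simp only [Finset.mem_Icc, Finset.mem_Ico] at *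
      omega
    · intro j _ hj
      by_contra h0
      exact hj (hv (Finsupp.mem_support_iff.2 h0))
  rw [← h, map_sum, LinearMap.sum_apply]

theorem exists_primitive (v : ℤ →₀ V) (a : ℤ) (N : ℕ)
    (hv : v.support ⊆ Finset.Ico a (a + (N + 1 : ℕ)))
    (h0 : ∑ i ∈ Finset.Ico a (a + (N + 1 : ℕ)), v i = 0) :
    ∃ w : ℤ →₀ V, w.support ⊆ Finset.Ico a (a + N) ∧ v = w - tshift V w := by
  classical
  have hz : ∀ i, i ∉ Finset.Ico a (a + (N + 1 : ℕ)) → v i = 0 := fun i hi => by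
    by_contra h
    exact hi (hv (Finsupp.mem_support_iff.2 h))
  have hW : ∀ i, ∑ j ∈ Finset.Ico a (i + 1), v j ≠ 0 → i ∈ Finset.Ico a (a + N) := by
    intro i hi
    by_contra hc
    apply hi
    rw [Finset.mem_Ico] at hc
    by_cases hia : i < a
    · rw [Finset.Ico_eq_empty (by omega), Finset.sum_empty]
    · rw [← h0]
      symm
      apply Finset.sum_subset
      · intro j hj
        simp only [Finset.mem_Ico] at *
        push_cast at *
        omega
      · intro j _ hj
        exact hz j hj
  refine ⟨Finsupp.onFinset (Finset.Ico a (a + N)) (fun i => ∑ j ∈ Finset.Ico a (i + 1), v j) hW,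
    Finsupp.support_onFinset_subset, ?_⟩
  ext i
  rw [Finsupp.sub_apply, tshift_apply, Finsupp.onFinset_apply, Finsupp.onFinset_apply,
    sub_add_cancel]
  by_cases hia : i < a
  · rw [Finset.Ico_eq_empty (by omega), Finset.Ico_eq_empty (by omega)]
    rw [hz i (by rw [Finset.mem_Ico]; omega)]
    simp
  · have : Finset.Ico a (i + 1) = insert i (Finset.Ico a i) := by
      ext j
      simp only [Finset.mem_Ico, Finset.mem_insert]
      omega
    rw [this, Finset.sum_insert (by simp), add_sub_cancel_right]

theorem descent (b : LinearMap.BilinForm k V) (haniso : ∀ v : V, b v v = 0 → v = 0) (N : ℕ) :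
    ∀ (v : ℤ →₀ V) (a : ℤ), v.support ⊆ Finset.Ico a (a + N) →
      (∀ n : ℤ, Btilde k V b n v v = 0) → v = 0 := by
  induction N with
  | zero =>
    intro v a hv _
    simpa using hv
  | succ N ih =>
    intro v a hv hB
    have h0 := haniso _ ((btilde_total k V b v a (N + 1) hv).symm.trans
      (Finset.sum_eq_zero fun n _ => hB n))
    obtain ⟨w, hw, rfl⟩ := exists_primitive V v a N hv h0
    have hrec : ∀ n, Btilde k V b (n - 1) w w
        = 2 * Btilde k V b n w w - Btilde k V b (n + 1) w w := by
      intro n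
      have := hB n
      rw [btilde_sub_right, btilde_sub_left, btilde_sub_left, btilde_shift_right,
        btilde_shift_left, btilde_shift_left, btilde_shift_right, add_sub_cancel_right] at this
      linear_combination -this
    have hbig : ∀ n : ℤ, N ≤ n → Btilde k V b n w w = 0 := by
      intro n hn
      rw [btilde_eq_sum k V b n w w _ hw]
      refine Finset.sum_eq_zero fun i hi => ?_
      have : w (i - n) = 0 := by
        by_contra h
        have := hw (Finsupp.mem_support_iff.2 h)
        rw [Finset.mem_Ico] at this hi
        omega
      simp [this]
    have hdown : ∀ m : ℕ, Btilde k V b (N - m) w w = 0 ∧ Btilde k V b (N - m + 1) w w = 0 := by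
      intro m
      induction m with
      | zero => exact ⟨hbig _ (by simp), hbig _ (by simp)⟩
      | succ m ihm =>
        have h := hrec (N - m)
        rw [ihm.1, ihm.2] at h
        have e : ((N : ℤ) - (m + 1 : ℕ)) = N - m - 1 := by push_cast; ring
        rw [e, sub_add_cancel]
        exact ⟨by simpa using h, ihm.1⟩
    have hw0 : w = 0 := by
      refine ih w a hw fun n => ?_
      by_cases hn : (N : ℤ) ≤ n
      · exact hbig n hn
      · have := (hdown (N - n).toNat).1
        rwa [show (N : ℤ) - ((N - n).toNat : ℤ) = n by omega] at this
    subst hw0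
    simp [tshift]

/-- The extended form `b̃` on `V[t,t⁻¹]` is anisotropic:
`b̃(v,v) = 0` (i.e. all its Laurent coefficients vanish) implies `v = 0`;
equivalently, if `v ≠ 0` then some coefficient `∑ᵢ b(v_{i-n}, v_i)` is nonzero. -/
theorem stmt2 [FiniteDimensional k V] (b : LinearMap.BilinForm k V)
    (hsymm : ∀ v w : V, b v w = b w v)
    (haniso : ∀ v : V, b v v = 0 → v = 0) :
    (∀ v : ℤ →₀ V, (∀ n : ℤ, Btilde k V b n v v = 0) → v = 0) ∧
    (∀ v : ℤ →₀ V, v ≠ 0 → ∃ n : ℤ, Btilde k V b n v v ≠ 0) := by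
  have main : ∀ v : ℤ →₀ V, (∀ n : ℤ, Btilde k V b n v v = 0) → v = 0 := by
    intro v hv
    obtain ⟨M, hM⟩ : ∃ M : ℕ, ∀ i ∈ v.support, i.natAbs ≤ M :=
      ⟨v.support.sup Int.natAbs, fun i hi => Finset.le_sup (f := Int.natAbs) hi⟩
    refine descent k V b haniso (2 * M + 1) v (-M) ?_ hv
    intro i hi
    have := hM i hi
    rw [Finset.mem_Ico]
    push_cast
    omega
  refine ⟨main, fun v hv => ?_⟩
  by_contra hc
  push Not at hc
  exact hv (main v hc)
end

section
/- (i) If φ ∈ PPU(b)⁺ then φ⁻¹ ∈ PPU(b)⁻; (ii) PPU(b)⁺ ∩ PPU(b)⁻ = {id}; in particular PPU(b)⁺ is a submonoid of PPU(b) with PPU(b)⁺ ∩ (PPU(b)⁺)⁻¹ = {id}, and therefore the relation φ ≤ ψ :⟺ ψφ⁻¹ ∈ PPU(b)⁺ (equivalently φψ⁻¹ ∈ PPU(b)⁻) is a right-invariant partial order on PPU(b) with positive cone PPU(b)⁺ and negative cone PPU(b)⁻. -/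
open Finsupp

variable (k : Type*) [Field k] (V : Type*) [AddCommGroup V] [Module k V]

/-- Multiplication by `t^n` on `V[t,t⁻¹] := ℤ →₀ V` (writing `v = ∑ᵢ tⁱ vᵢ` as the
finitely supported function `i ↦ vᵢ`). -/
noncomputable def shift (n : ℤ) : (ℤ →₀ V) ≃ₗ[k] (ℤ →₀ V) :=
  Finsupp.domLCongr (Equiv.addRight n)

/-- `φ` is a paraunitary transformation: an invertible `k[t,t⁻¹]`-linear
(i.e. `k`-linear and commuting with multiplication by `t`) endomorphism of
`V[t,t⁻¹]` preserving `b̃`. -/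
def IsPU (b : LinearMap.BilinForm k V) (φ : (ℤ →₀ V) ≃ₗ[k] (ℤ →₀ V)) : Prop :=
  (∀ v, φ (shift k V 1 v) = shift k V 1 (φ v)) ∧
  ∀ (n : ℤ) (v w : ℤ →₀ V), Btilde k V b n (φ v) (φ w) = Btilde k V b n v w

/-- The specialization `t = 1` of a `k[t,t⁻¹]`-linear endomorphism `f = ∑ᵢ tⁱ fᵢ`
of `V[t,t⁻¹]`, i.e. the endomorphism `ε₁(f) = ∑ᵢ fᵢ` of `V`. -/
noncomputable def eps (f : (ℤ →₀ V) →ₗ[k] (ℤ →₀ V)) : V →ₗ[k] V :=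
  (Finsupp.lsum k fun _ : ℤ => (LinearMap.id : V →ₗ[k] V)) ∘ₗ f ∘ₗ Finsupp.lsingle 0

/-- `φ` is pure paraunitary: paraunitary and specializing to the identity at `t = 1`. -/
def IsPPU (b : LinearMap.BilinForm k V) (φ : (ℤ →₀ V) ≃ₗ[k] (ℤ →₀ V)) : Prop :=
  IsPU k V b φ ∧ eps k V (φ : (ℤ →₀ V) →ₗ[k] (ℤ →₀ V)) = LinearMap.id

/-- `φ ∈ PPU(b)⁻`: pure paraunitary and all Laurent coefficients `φᵢ` for `i > 0` vanish. -/
def PPUneg (b : LinearMap.BilinForm k V) (φ : (ℤ →₀ V) ≃ₗ[k] (ℤ →₀ V)) : Prop :=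
  IsPPU k V b φ ∧ ∀ (x : V) (i : ℤ), 0 < i → φ (Finsupp.single 0 x) i = 0

/-- `φ ∈ PPU(b)⁺`: pure paraunitary and all Laurent coefficients `φᵢ` for `i < 0` vanish. -/
def PPUpos (b : LinearMap.BilinForm k V) (φ : (ℤ →₀ V) ≃ₗ[k] (ℤ →₀ V)) : Prop :=
  IsPPU k V b φ ∧ ∀ (x : V) (i : ℤ), i < 0 → φ (Finsupp.single 0 x) i = 0

section helpers
variable {k V}
variable {b : LinearMap.BilinForm k V} {φ ψ : (ℤ →₀ V) ≃ₗ[k] (ℤ →₀ V)}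

theorem shift_app (n : ℤ) (v : ℤ →₀ V) (i : ℤ) : shift k V n v i = v (i - n) := by
  simp [shift, Finsupp.domLCongr_apply, sub_eq_add_neg]

theorem shift_sgl (n m : ℤ) (x : V) :
    shift k V n (Finsupp.single m x) = Finsupp.single (m + n) x := by
  simp [shift]

theorem app_single (h : ∀ v, φ (shift k V 1 v) = shift k V 1 (φ v)) (x : V) (n : ℤ) :
    ∀ i, φ (Finsupp.single n x) i = φ (Finsupp.single 0 x) (i - n) := by
  induction n using Int.induction_on with
  | zero => simp
  | succ m ih =>
    intro i
    rw [← shift_sgl (k := k), h, shift_app, ih]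
    congr 1; ring
  | pred m ih =>
    intro i
    have := ih (i + 1)
    rw [show (-(m : ℤ)) = (-(m : ℤ) - 1) + 1 by ring, ← shift_sgl (k := k), h, shift_app] at this
    rw [show i = i + 1 - 1 by ring, this]
    congr 1; ring

theorem app_eq (h : ∀ v, φ (shift k V 1 v) = shift k V 1 (φ v)) (v : ℤ →₀ V) (i : ℤ) :
    φ v i = v.sum fun n x => φ (Finsupp.single 0 x) (i - n) := by
  conv_lhs => rw [← Finsupp.sum_single v]
  rw [map_finsuppSum, Finsupp.sum_apply]
  exact Finsupp.sum_congr fun n _ => app_single h _ _ _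

/-- the evaluation at `t = 1` -/
noncomputable def evOne : (ℤ →₀ V) →ₗ[k] V :=
  Finsupp.lsum k fun _ : ℤ => (LinearMap.id : V →ₗ[k] V)

theorem evOne_single (n : ℤ) (x : V) : evOne (k := k) (Finsupp.single n x) = x := by
  simp [evOne]

theorem evOne_shift (n : ℤ) (v : ℤ →₀ V) :
    evOne (k := k) (shift k V n v) = evOne (k := k) v := by
  have : (evOne (k := k) (V := V)) ∘ₗ (shift k V n).toLinearMap = evOne := by
    apply Finsupp.lhom_ext
    intro m x
    simp [shift_sgl, evOne_single]
  exact LinearMap.congr_fun this v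

theorem eps_iff (h : ∀ v, φ (shift k V 1 v) = shift k V 1 (φ v)) :
    eps k V (φ : (ℤ →₀ V) →ₗ[k] (ℤ →₀ V)) = LinearMap.id ↔
      ∀ v, evOne (k := k) (φ v) = evOne (k := k) v := by
  constructor
  · intro he
    have h0 : ∀ x, evOne (k := k) (φ (Finsupp.single 0 x)) = x := fun x =>
      LinearMap.congr_fun he x
    have : (evOne (k := k) (V := V)) ∘ₗ φ.toLinearMap = evOne := by
      apply Finsupp.lhom_ext
      intro m x
      have e : φ (Finsupp.single m x) = shift k V m (φ (Finsupp.single 0 x)) := by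
        ext i
        rw [app_single h, shift_app]
      simp [e, evOne_shift, h0, evOne_single]
    exact fun v => LinearMap.congr_fun this v
  · intro he
    ext x
    have := he (Finsupp.single 0 x)
    rw [evOne_single] at this
    exact this

theorem ppu_one : IsPPU k V b 1 :=
  ⟨⟨fun _ => rfl, fun _ _ _ => rfl⟩, (eps_iff (φ := 1) (fun _ => rfl)).2 fun _ => rfl⟩

theorem ppu_mul (h₁ : IsPPU k V b φ) (h₂ : IsPPU k V b ψ) : IsPPU k V b (φ * ψ) := by
  have hs : ∀ v, (φ * ψ) (shift k V 1 v) = shift k V 1 ((φ * ψ) v) := fun v => by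
    simp only [LinearEquiv.mul_apply, h₂.1.1, h₁.1.1]
  refine ⟨⟨hs, fun n v w => ?_⟩, (eps_iff hs).2 fun v => ?_⟩
  · simp only [LinearEquiv.mul_apply, h₂.1.2, h₁.1.2]
  · simp only [LinearEquiv.mul_apply]
    rw [(eps_iff h₁.1.1).1 h₁.2, (eps_iff h₂.1.1).1 h₂.2]

theorem app_inv (v : ℤ →₀ V) : φ (φ⁻¹ v) = v := φ.apply_symm_apply v

theorem ppu_inv (h : IsPPU k V b φ) : IsPPU k V b φ⁻¹ := by
  have hs : ∀ v, φ⁻¹ (shift k V 1 v) = shift k V 1 (φ⁻¹ v) := fun v => by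
    apply φ.injective
    rw [h.1.1, app_inv, app_inv]
  refine ⟨⟨hs, fun n v w => ?_⟩, (eps_iff hs).2 fun v => ?_⟩
  · rw [← h.1.2, app_inv, app_inv]
  · rw [← (eps_iff h.1.1).1 h.2, app_inv]

theorem Bt_right (n j : ℤ) (v : ℤ →₀ V) (x : V) :
    Btilde k V b n v (Finsupp.single j x) = b (v (j - n)) x := by
  simp [Btilde]

theorem Bt_left (n : ℤ) (w : ℤ →₀ V) (y : V) :
    Btilde k V b n (Finsupp.single 0 y) w = b y (w n) := by
  classical
  unfold Btilde
  rw [Finsupp.sum, Finset.sum_eq_single n]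
  · simp
  · intro i _ hi
    rw [Finsupp.single_eq_of_ne (by omega)]
    simp
  · intro hn
    simp [Finsupp.notMem_support_iff.1 hn]

theorem adj (h : IsPPU k V b φ) (x y : V) (n : ℤ) :
    b y (φ⁻¹ (Finsupp.single 0 x) n) = b (φ (Finsupp.single 0 y) (-n)) x := by
  rw [← Bt_left, ← h.1.2, app_inv, Bt_right, zero_sub]

theorem neg_of_pos (haniso : ∀ v : V, b v v = 0 → v = 0) (h : PPUpos k V b φ) :
    PPUneg k V b φ⁻¹ := by
  refine ⟨ppu_inv h.1, fun x i hi => haniso _ ?_⟩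
  rw [adj h.1, h.2 _ _ (by omega)]
  simp

theorem pos_of_neg (haniso : ∀ v : V, b v v = 0 → v = 0) (h : PPUneg k V b φ) :
    PPUpos k V b φ⁻¹ := by
  refine ⟨ppu_inv h.1, fun x i hi => haniso _ ?_⟩
  rw [adj h.1, h.2 _ _ (by omega)]
  simp

theorem pos_one : PPUpos k V b 1 :=
  ⟨ppu_one, fun x i hi => by
    rw [LinearEquiv.coe_one, id, Finsupp.single_eq_of_ne (by omega)]⟩

theorem neg_one' : PPUneg k V b 1 :=
  ⟨ppu_one, fun x i hi => by
    rw [LinearEquiv.coe_one, id, Finsupp.single_eq_of_ne (by omega)]⟩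

theorem pos_mul (h₁ : PPUpos k V b φ) (h₂ : PPUpos k V b ψ) : PPUpos k V b (φ * ψ) := by
  refine ⟨ppu_mul h₁.1 h₂.1, fun x i hi => ?_⟩
  rw [LinearEquiv.mul_apply, app_eq h₁.1.1.1]
  refine Finset.sum_eq_zero fun n hn => h₁.2 _ _ ?_
  by_contra hc
  exact Finsupp.mem_support_iff.1 hn (h₂.2 _ _ (by omega))

theorem neg_mul' (h₁ : PPUneg k V b φ) (h₂ : PPUneg k V b ψ) : PPUneg k V b (φ * ψ) := by
  refine ⟨ppu_mul h₁.1 h₂.1, fun x i hi => ?_⟩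
  rw [LinearEquiv.mul_apply, app_eq h₁.1.1.1]
  refine Finset.sum_eq_zero fun n hn => h₁.2 _ _ ?_
  by_contra hc
  exact Finsupp.mem_support_iff.1 hn (h₂.2 _ _ (by omega))

theorem eq_one_of (h₁ : PPUpos k V b φ) (h₂ : PPUneg k V b φ) : φ = 1 := by
  have h0 : ∀ x, φ (Finsupp.single 0 x) = Finsupp.single 0 x := by
    intro x
    have e : φ (Finsupp.single 0 x) = Finsupp.single 0 (φ (Finsupp.single 0 x) 0) := by
      ext i
      rcases lt_trichotomy i 0 with hi | hi | hi
      · rw [h₁.2 _ _ hi, Finsupp.single_eq_of_ne (by omega)]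
      · subst hi; simp
      · rw [h₂.2 _ _ hi, Finsupp.single_eq_of_ne (by omega)]
    have := (eps_iff h₁.1.1.1).1 h₁.1.2 (Finsupp.single 0 x)
    rw [e, evOne_single, evOne_single] at this
    rw [e, this]
  apply LinearEquiv.toLinearMap_injective
  apply Finsupp.lhom_ext
  intro m x
  ext i
  change φ (Finsupp.single m x) i = Finsupp.single m x i
  rw [app_single h₁.1.1.1, h0, ← shift_app (k := k), shift_sgl, zero_add]

end helpers

/-- Inverses of elements of `PPU(b)⁺` lie in `PPU(b)⁻`,
`PPU(b)⁺ ∩ PPU(b)⁻ = {1}`, `PPU(b)⁺` and `PPU(b)⁻` are submonoids with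
`PPU(b)⁺ ∩ (PPU(b)⁺)⁻¹ = {1}`, and `φ ≤ ψ :⟺ ψφ⁻¹ ∈ PPU(b)⁺ ⟺ φψ⁻¹ ∈ PPU(b)⁻`
is a right-invariant partial order on `PPU(b)`. -/
theorem stmt5 [FiniteDimensional k V] (b : LinearMap.BilinForm k V)
    (hsymm : ∀ v w : V, b v w = b w v)
    (haniso : ∀ v : V, b v v = 0 → v = 0) :
    (∀ φ, PPUpos k V b φ → PPUneg k V b φ⁻¹) ∧
    (∀ φ, PPUpos k V b φ → PPUneg k V b φ → φ = 1) ∧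
    PPUpos k V b 1 ∧ PPUneg k V b 1 ∧
    (∀ φ ψ, PPUpos k V b φ → PPUpos k V b ψ → PPUpos k V b (φ * ψ)) ∧
    (∀ φ ψ, PPUneg k V b φ → PPUneg k V b ψ → PPUneg k V b (φ * ψ)) ∧
    (∀ φ, PPUpos k V b φ → PPUpos k V b φ⁻¹ → φ = 1) ∧
    (∀ φ ψ, IsPPU k V b φ → IsPPU k V b ψ →
      (PPUpos k V b (ψ * φ⁻¹) ↔ PPUneg k V b (φ * ψ⁻¹))) ∧
    (∀ φ, IsPPU k V b φ → PPUpos k V b (φ * φ⁻¹)) ∧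
    (∀ φ ψ, IsPPU k V b φ → IsPPU k V b ψ →
      PPUpos k V b (ψ * φ⁻¹) → PPUpos k V b (φ * ψ⁻¹) → φ = ψ) ∧
    (∀ φ ψ χ, IsPPU k V b φ → IsPPU k V b ψ → IsPPU k V b χ →
      PPUpos k V b (ψ * φ⁻¹) → PPUpos k V b (χ * ψ⁻¹) → PPUpos k V b (χ * φ⁻¹)) ∧
    (∀ φ ψ χ, IsPPU k V b φ → IsPPU k V b ψ → IsPPU k V b χ →
      PPUpos k V b (ψ * φ⁻¹) → PPUpos k V b ((ψ * χ) * (φ * χ)⁻¹)) := by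
  have h7 : ∀ φ, PPUpos k V b φ → PPUpos k V b φ⁻¹ → φ = 1 := fun φ h₁ h₂ =>
    inv_eq_one.1 (eq_one_of h₂ (neg_of_pos haniso h₁))
  refine ⟨fun φ h => neg_of_pos haniso h, fun φ => eq_one_of, pos_one, neg_one',
    fun φ ψ => pos_mul, fun φ ψ => neg_mul', h7, fun φ ψ _ _ => ⟨fun h => ?_, fun h => ?_⟩,
    fun φ _ => ?_, fun φ ψ _ _ h₁ h₂ => ?_, fun φ ψ χ _ _ _ h₁ h₂ => ?_,
    fun φ ψ χ _ _ _ h => ?_⟩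
  · simpa using neg_of_pos haniso h
  · simpa using pos_of_neg haniso h
  · rw [mul_inv_cancel]; exact pos_one
  · exact mul_inv_eq_one.1 (h7 _ h₂ (by simpa using h₁))
  · simpa [mul_assoc] using pos_mul h₂ h₁
  · simpa [mul_assoc] using h
end

section
/- Let V¹ := {tv + V[t⁻¹] : v ∈ V} ⊆ V⊕ be the image in V⊕ of the set of elements of the form tv with v ∈ V. Then V¹ is an essential k[t⁻¹]-submodule of V⊕: every nonzero k[t⁻¹]-submodule U of V⊕ satisfies U ∩ V¹ ≠ 0. -/
open Finsupp

variable (k : Type*) [Field k] (V : Type*) [AddCommGroup V] [Module k V]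

/-- `V[t⁻¹] ⊆ V[t,t⁻¹]`: the elements with `vᵢ = 0` for `i > 0`. -/
def Vneg : Submodule k (ℤ →₀ V) where
  carrier := {v | ∀ i : ℤ, 0 < i → v i = 0}
  add_mem' := by
    intro a c ha hc i hi
    simp only [Set.mem_setOf_eq] at *
    simp [Finsupp.add_apply, ha i hi, hc i hi]
  zero_mem' := by intro i _; rfl
  smul_mem' := by
    intro c x hx i hi
    simp only [Set.mem_setOf_eq] at *
    simp [Finsupp.smul_apply, hx i hi]

/-- Multiplication by `t⁻¹` descends to the quotient `V⊕ = V[t,t⁻¹]/V[t⁻¹]`,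
making `V⊕` a module over `k[t⁻¹]`. -/
noncomputable def shiftQ : ((ℤ →₀ V) ⧸ Vneg k V) →ₗ[k] ((ℤ →₀ V) ⧸ Vneg k V) :=
  Submodule.mapQ (Vneg k V) (Vneg k V) (shift k V (-1)).toLinearMap (by
    intro v hv i hi
    have h : (shift k V (-1)).toLinearMap v i = v (i + 1) := by
      simp [shift, Finsupp.domLCongr_apply, Finsupp.equivMapDomain_apply]
    rw [h]
    exact hv (i + 1) (by omega))

theorem shift_neg_one_apply (v : ℤ →₀ V) (i : ℤ) : shift k V (-1) v i = v (i + 1) := by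
  simp [shift, Finsupp.domLCongr_apply, Finsupp.equivMapDomain_apply]

theorem stmt10_aux (U : Submodule k ((ℤ →₀ V) ⧸ Vneg k V))
    (hstable : ∀ x ∈ U, shiftQ k V x ∈ U) (n : ℕ) :
    ∀ v : ℤ →₀ V, (Vneg k V).mkQ v ∈ U → v ∉ Vneg k V → (∀ i : ℤ, (n : ℤ) < i → v i = 0) →
    ∃ w : V, (Vneg k V).mkQ (Finsupp.single 1 w) ∈ U ∧ Finsupp.single (1 : ℤ) w ∉ Vneg k V := by
  induction n with
  | zero =>
    intro v _ hv h
    exact absurd (fun i hi => h i (by simpa using hi)) hv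
  | succ n ih =>
    intro v hU hv h
    by_cases hs : shift k V (-1) v ∈ Vneg k V
    · have hsub : v - Finsupp.single 1 (v 1) ∈ Vneg k V := by
        intro i hi
        rw [Finsupp.sub_apply]
        by_cases h1 : i = 1
        · subst h1; simp
        · have h2 := hs (i - 1) (by omega)
          rw [shift_neg_one_apply, sub_add_cancel] at h2
          rw [h2, Finsupp.single_eq_of_ne h1, sub_zero]
      refine ⟨v 1, ?_, ?_⟩
      · have : (Vneg k V).mkQ v = (Vneg k V).mkQ (Finsupp.single 1 (v 1)) :=
          (Submodule.Quotient.eq _).2 hsub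
        rwa [← this]
      · intro hm
        apply hv
        have := add_mem hsub hm
        rwa [sub_add_cancel] at this
    · refine ih (shift k V (-1) v) (hstable _ hU) hs ?_
      intro i hi
      rw [shift_neg_one_apply]
      exact h _ (by push_cast; omega)

/-- The image `V¹` of `{tv : v ∈ V}` in `V⊕ = V[t,t⁻¹]/V[t⁻¹]` is an
essential `k[t⁻¹]`-submodule: every nonzero `k[t⁻¹]`-submodule (i.e. `k`-submodule
stable under multiplication by `t⁻¹`) meets it nontrivially. -/
theorem stmt10 [FiniteDimensional k V]
    (U : Submodule k ((ℤ →₀ V) ⧸ Vneg k V))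
    (hstable : ∀ x ∈ U, shiftQ k V x ∈ U) (hne : U ≠ ⊥) :
    U ⊓ Submodule.map (Vneg k V).mkQ
        (Submodule.map (Finsupp.lsingle (1 : ℤ) : V →ₗ[k] (ℤ →₀ V)) ⊤) ≠ ⊥ := by
  obtain ⟨x, hx, hx0⟩ := (Submodule.ne_bot_iff U).1 hne
  obtain ⟨v, rfl⟩ := (Vneg k V).mkQ_surjective x
  have hv : v ∉ Vneg k V := fun h => hx0 ((Submodule.Quotient.mk_eq_zero _).2 h)
  obtain ⟨n, hn⟩ : ∃ n : ℕ, ∀ i : ℤ, (n : ℤ) < i → v i = 0 := by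
    refine ⟨v.support.sup Int.toNat, fun i hi => ?_⟩
    by_contra h0
    have := Finset.le_sup (f := Int.toNat) (Finsupp.mem_support_iff.2 h0)
    omega
  obtain ⟨w, hw, hw0⟩ := stmt10_aux k V U hstable n v hx hv hn
  refine (Submodule.ne_bot_iff _).2 ⟨_, ⟨hw, ?_⟩, ?_⟩
  · exact ⟨_, ⟨w, trivial, rfl⟩, rfl⟩
  · exact fun h => hw0 ((Submodule.Quotient.mk_eq_zero _).1 h)
end

section
/- For every φ ∈ PPU(b)⁻ one has the b̃₀-orthogonal direct sum decomposition V[t,t⁻¹] = π⁻¹(Ω(φ)) ⊕ φ⁻¹(tV[t]), where π : V[t,t⁻¹] → V⊕ is the canonical projection; equivalently, π⁻¹(Ω(φ)) = φ⁻¹(V[t⁻¹]) and V[t,t⁻¹] = φ⁻¹(tV[t]) ⊕ φ⁻¹(V[t⁻¹]) b̃₀-orthogonally. -/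
open Finsupp

variable (k : Type*) [Field k] (V : Type*) [AddCommGroup V] [Module k V]

/-- `tV[t] ⊆ V[t,t⁻¹]`: the elements with `vᵢ = 0` for `i ≤ 0`. -/
def Vpos1 : Submodule k (ℤ →₀ V) where
  carrier := {v | ∀ i : ℤ, i ≤ 0 → v i = 0}
  add_mem' := by
    intro a c ha hc i hi
    simp only [Set.mem_setOf_eq] at *
    simp [Finsupp.add_apply, ha i hi, hc i hi]
  zero_mem' := by intro i _; rfl
  smul_mem' := by
    intro c x hx i hi
    simp only [Set.mem_setOf_eq] at *
    simp [Finsupp.smul_apply, hx i hi]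

/-- The kernel `Ω(φ) ⊆ V⊕` of the endomorphism of `V⊕ = V[t,t⁻¹]/V[t⁻¹]` induced by `φ`. -/
noncomputable def OmegaSub (φ : (ℤ →₀ V) ≃ₗ[k] (ℤ →₀ V)) :
    Submodule k ((ℤ →₀ V) ⧸ Vneg k V) :=
  Submodule.map (Vneg k V).mkQ
    (Submodule.comap (φ : (ℤ →₀ V) →ₗ[k] (ℤ →₀ V)) (Vneg k V))

theorem shift_one_apply_aux (v : ℤ →₀ V) (j : ℤ) : shift k V 1 v j = v (j - 1) := by
  simp [shift, Finsupp.domLCongr_apply, Finsupp.equivMapDomain_apply, sub_eq_add_neg]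

theorem shift_one_single_aux (i : ℤ) (x : V) :
    shift k V 1 (Finsupp.single i x) = Finsupp.single (i + 1) x := by
  simp [shift]

theorem phi_single_aux (φ : (ℤ →₀ V) ≃ₗ[k] (ℤ →₀ V))
    (h : ∀ v, φ (shift k V 1 v) = shift k V 1 (φ v)) (x : V) (i : ℤ) :
    ∀ j, φ (Finsupp.single i x) j = φ (Finsupp.single 0 x) (j - i) := by
  have key : ∀ i j : ℤ, φ (Finsupp.single (i + 1) x) j = φ (Finsupp.single i x) (j - 1) := by
    intro i j
    rw [← shift_one_single_aux k V, h, shift_one_apply_aux]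
  induction i using Int.induction_on with
  | zero => intro j; simp
  | succ i ih =>
    intro j
    rw [key, ih]
    congr 1
    ring
  | pred i ih =>
    intro j
    have h1 := key (-(i : ℤ) - 1) (j + 1)
    rw [sub_add_cancel, add_sub_cancel_right] at h1
    rw [← h1, ih]
    congr 1
    ring

theorem phi_Vneg_aux (φ : (ℤ →₀ V) ≃ₗ[k] (ℤ →₀ V))
    (h : ∀ v, φ (shift k V 1 v) = shift k V 1 (φ v))
    (h0 : ∀ (x : V) (i : ℤ), 0 < i → φ (Finsupp.single 0 x) i = 0) :
    Vneg k V ≤ Submodule.comap (φ : (ℤ →₀ V) →ₗ[k] (ℤ →₀ V)) (Vneg k V) := by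
  intro v hv
  rw [← Finsupp.sum_single v]
  refine Submodule.sum_mem _ fun i hi => ?_
  have hi0 : i ≤ 0 := by
    by_contra hc
    exact (Finsupp.mem_support_iff.mp hi) (hv i (by omega))
  intro j hj
  change φ (Finsupp.single i (v i)) j = 0
  rw [phi_single_aux k V φ h]
  exact h0 _ _ (by omega)

/-- For `φ ∈ PPU(b)⁻`: `π⁻¹(Ω(φ)) = φ⁻¹(V[t⁻¹])`, and
`V[t,t⁻¹] = φ⁻¹(tV[t]) ⊕ φ⁻¹(V[t⁻¹])` is a `b̃₀`-orthogonal direct sum. -/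
theorem stmt14 [FiniteDimensional k V] (b : LinearMap.BilinForm k V)
    (hsymm : ∀ v w : V, b v w = b w v)
    (haniso : ∀ v : V, b v v = 0 → v = 0)
    (φ : (ℤ →₀ V) ≃ₗ[k] (ℤ →₀ V)) (hφ : PPUneg k V b φ) :
    (Submodule.comap (Vneg k V).mkQ (OmegaSub k V φ) =
      Submodule.comap (φ : (ℤ →₀ V) →ₗ[k] (ℤ →₀ V)) (Vneg k V)) ∧
    (∀ x ∈ Submodule.comap (φ : (ℤ →₀ V) →ₗ[k] (ℤ →₀ V)) (Vpos1 k V),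
      ∀ y ∈ Submodule.comap (φ : (ℤ →₀ V) →ₗ[k] (ℤ →₀ V)) (Vneg k V),
        Btilde k V b 0 x y = 0) ∧
    (Submodule.comap (φ : (ℤ →₀ V) →ₗ[k] (ℤ →₀ V)) (Vpos1 k V) ⊓
      Submodule.comap (φ : (ℤ →₀ V) →ₗ[k] (ℤ →₀ V)) (Vneg k V) = ⊥) ∧
    (Submodule.comap (φ : (ℤ →₀ V) →ₗ[k] (ℤ →₀ V)) (Vpos1 k V) ⊔
      Submodule.comap (φ : (ℤ →₀ V) →ₗ[k] (ℤ →₀ V)) (Vneg k V) = ⊤) := by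
  obtain ⟨⟨⟨hs, hB⟩, _⟩, h0⟩ := hφ
  refine ⟨?_, ?_, ?_, ?_⟩
  · rw [OmegaSub, Submodule.comap_map_mkQ]
    exact sup_eq_right.mpr (phi_Vneg_aux k V φ hs h0)
  · intro x hx y hy
    rw [← hB]
    refine Finset.sum_eq_zero fun i hi => ?_
    have hi0 : i ≤ 0 := by
      by_contra hc
      exact (Finsupp.mem_support_iff.mp hi) (hy i (by omega))
    have hx0 : φ x i = 0 := hx i hi0
    simp [hx0]
  · rw [eq_bot_iff]
    rintro x ⟨hx, hy⟩
    have : φ x = 0 := by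
      ext i
      rcases le_or_gt i 0 with hi | hi
      · exact hx i hi
      · exact hy i hi
    simpa using this
  · rw [eq_top_iff]
    intro x _
    classical
    rw [Submodule.mem_sup]
    refine ⟨φ.symm ((φ x).filter fun i => 0 < i), ?_,
      φ.symm ((φ x).filter fun i => ¬ 0 < i), ?_, ?_⟩
    · intro i hi
      change φ (φ.symm _) i = 0
      rw [φ.apply_symm_apply]
      exact Finsupp.filter_apply_neg _ _ (by omega)
    · intro i hi
      change φ (φ.symm _) i = 0
      rw [φ.apply_symm_apply]
      exact Finsupp.filter_apply_neg _ _ (by omega)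
    · rw [← map_add, Finsupp.filter_pos_add_filter_neg, φ.symm_apply_apply]
end

section
/- Let U, W be k-subspaces of V. If U* ⊆ W then p_U p_W = p_{U ∩ W}. Moreover, for arbitrary U, W, the product p_U p_W lies in the interval [t⁻¹·id, id] of PPU(b) (with respect to the right-invariant order with negative cone PPU(b)⁻) if and only if U* ⊆ W. -/
open Finsupp

variable (k : Type*) [Field k] (V : Type*) [AddCommGroup V] [Module k V]

/-- The orthogonal complement `U* = {v ∈ V | b(u,v) = 0 for all u ∈ U}`. -/
def orthoC (b : LinearMap.BilinForm k V) (U : Submodule k V) : Submodule k V where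
  carrier := {v | ∀ u ∈ U, b u v = 0}
  add_mem' := by
    intro a c ha hc u hu
    simp only [Set.mem_setOf_eq] at *
    rw [map_add, ha u hu, hc u hu, add_zero]
  zero_mem' := by intro u _; simp
  smul_mem' := by
    intro c x hx u hu
    simp only [Set.mem_setOf_eq] at *
    rw [map_smul, hx u hu, smul_zero]

/-- The endomorphism `p_U = t⁻¹ π_{U*} + π_U` of `V[t,t⁻¹]`, where `π` is the
projection of `V` onto `U` along `U*` (so that `π_{U*} = 1 - π`). -/
noncomputable def pULin (π : V →ₗ[k] V) : (ℤ →₀ V) →ₗ[k] (ℤ →₀ V) :=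
  (shift k V (-1)).toLinearMap ∘ₗ Finsupp.mapRange.linearMap (LinearMap.id - π) +
    Finsupp.mapRange.linearMap π

section helpers
variable {k V}

theorem shift_single (n i : ℤ) (x : V) :
    shift k V n (Finsupp.single i x) = Finsupp.single (i + n) x := by
  simp [shift]

theorem pULin_single (π : V →ₗ[k] V) (i : ℤ) (x : V) :
    pULin k V π (Finsupp.single i x) =
      Finsupp.single (i + -1) (x - π x) + Finsupp.single i (π x) := by
  simp [pULin, shift_single]

theorem Btilde_add_left (b : LinearMap.BilinForm k V) (n : ℤ) (u v w : ℤ →₀ V) :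
    Btilde k V b n (u + v) w = Btilde k V b n u w + Btilde k V b n v w := by
  simp [Btilde, Finsupp.sum_add]

theorem Btilde_add_right (b : LinearMap.BilinForm k V) (n : ℤ) (u v w : ℤ →₀ V) :
    Btilde k V b n u (v + w) = Btilde k V b n u v + Btilde k V b n u w := by
  unfold Btilde
  exact Finsupp.sum_add_index' (by simp) (by simp)

theorem Btilde_single (b : LinearMap.BilinForm k V) (n i j : ℤ) (x y : V) :
    Btilde k V b n (Finsupp.single i x) (Finsupp.single j y) =
      if i = j - n then b x y else 0 := by
  unfold Btilde
  rw [Finsupp.sum_single_index (by simp), Finsupp.single_apply]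
  split_ifs <;> simp

theorem Btilde_zero_left (b : LinearMap.BilinForm k V) (n : ℤ) (w : ℤ →₀ V) :
    Btilde k V b n 0 w = 0 := by simp [Btilde]

theorem Btilde_zero_right (b : LinearMap.BilinForm k V) (n : ℤ) (w : ℤ →₀ V) :
    Btilde k V b n w 0 = 0 := by simp [Btilde]

theorem Btilde_pULin (b : LinearMap.BilinForm k V) (π : V →ₗ[k] V)
    (h1 : ∀ x y, b (π x) (y - π y) = 0) (h2 : ∀ x y, b (x - π x) (π y) = 0)
    (n : ℤ) (v w : ℤ →₀ V) :
    Btilde k V b n (pULin k V π v) (pULin k V π w) = Btilde k V b n v w := by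
  induction v using Finsupp.induction_linear with
  | zero => simp [Btilde_zero_left]
  | add f g hf hg => rw [map_add, Btilde_add_left, Btilde_add_left, hf, hg]
  | single i x =>
    induction w using Finsupp.induction_linear with
    | zero => simp [Btilde_zero_right]
    | add f g hf hg => rw [map_add, Btilde_add_right, Btilde_add_right, hf, hg]
    | single j y =>
      rw [pULin_single, pULin_single]
      simp only [Btilde_add_left, Btilde_add_right, Btilde_single, h1, h2, ite_self, add_zero,
        zero_add]
      have e : (i + -1 = j + -1 - n) ↔ i = j - n := by omega
      simp only [e]
      split_ifs
      · have : b x y = b ((x - π x) + π x) ((y - π y) + π y) := by simp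
        rw [this]
        simp only [LinearMap.map_add, LinearMap.add_apply, h1, h2, add_zero, zero_add]
      · simp

theorem PPUneg_of_pULin (b : LinearMap.BilinForm k V) (π : V →ₗ[k] V)
    (h1 : ∀ x y, b (π x) (y - π y) = 0) (h2 : ∀ x y, b (x - π x) (π y) = 0)
    (φ : (ℤ →₀ V) ≃ₗ[k] (ℤ →₀ V)) (hφ : ∀ v, φ v = pULin k V π v) :
    PPUneg k V b φ := by
  refine ⟨⟨⟨fun v => ?_, fun n v w => ?_⟩, ?_⟩, fun x i hi => ?_⟩
  · rw [hφ, hφ]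
    induction v using Finsupp.induction_linear with
    | zero => simp
    | add f g hf hg => simp only [map_add, hf, hg]
    | single i x =>
      simp only [pULin_single, shift_single, map_add]
      congr 2; ring
  · rw [hφ, hφ, Btilde_pULin b π h1 h2]
  · ext x
    have e : eps k V (φ : (ℤ →₀ V) →ₗ[k] (ℤ →₀ V)) x =
        (Finsupp.lsum k fun _ : ℤ => (LinearMap.id : V →ₗ[k] V))
          (φ (Finsupp.single 0 x)) := rfl
    rw [e, hφ, pULin_single, map_add, Finsupp.lsum_single, Finsupp.lsum_single]
    simp
  · rw [hφ, pULin_single]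
    have a1 : (0 : ℤ) + -1 ≠ i := by omega
    have a2 : (0 : ℤ) ≠ i := by omega
    rw [Finsupp.add_apply, Finsupp.single_apply, Finsupp.single_apply, if_neg a1, if_neg a2,
      add_zero]

theorem pULin_compl (π : V →ₗ[k] V) (hπ : ∀ x, π (π x) = π x) (v : ℤ →₀ V) :
    pULin k V (LinearMap.id - π) (pULin k V π v) = shift k V (-1) v := by
  induction v using Finsupp.induction_linear with
  | zero => simp
  | add f g hf hg => simp only [map_add, hf, hg]
  | single i x =>
    simp only [pULin_single, shift_single, map_add, LinearMap.sub_apply, LinearMap.id_apply,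
      map_sub, hπ]
    simp [← Finsupp.single_add]

theorem pULin_comp (A B C : V →ₗ[k] V) (h1 : ∀ x, A (B x) = C x)
    (h2 : ∀ x, A (x - B x) = x - B x) (v : ℤ →₀ V) :
    pULin k V A (pULin k V B v) = pULin k V C v := by
  induction v using Finsupp.induction_linear with
  | zero => simp
  | add f g hf hg => simp only [map_add, hf, hg]
  | single i x =>
    simp only [pULin_single, map_add, h1, h2]
    rw [sub_self, Finsupp.single_zero, zero_add, ← add_assoc, ← Finsupp.single_add]
    congr 2; abel

end helpers

/-- If `U* ⊆ W` then `p_U p_W = p_{U ∩ W}`; and for arbitrary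
subspaces `U, W`, the product `p_U p_W` lies in the interval `[t⁻¹·id, id]` of
`PPU(b)` if and only if `U* ⊆ W`. -/
theorem stmt17 [FiniteDimensional k V] (b : LinearMap.BilinForm k V)
    (hsymm : ∀ v w : V, b v w = b w v)
    (haniso : ∀ v : V, b v v = 0 → v = 0)
    (U W : Submodule k V) (πU πW πI : V →ₗ[k] V)
    (hπU : ∀ v : V, πU v ∈ U ∧ v - πU v ∈ orthoC k V b U)
    (hπW : ∀ v : V, πW v ∈ W ∧ v - πW v ∈ orthoC k V b W)
    (hπI : ∀ v : V, πI v ∈ U ⊓ W ∧ v - πI v ∈ orthoC k V b (U ⊓ W)) :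
    (orthoC k V b U ≤ W → pULin k V πU ∘ₗ pULin k V πW = pULin k V πI) ∧
    (∀ pU pW : (ℤ →₀ V) ≃ₗ[k] (ℤ →₀ V),
      (pU : (ℤ →₀ V) →ₗ[k] (ℤ →₀ V)) = pULin k V πU →
      (pW : (ℤ →₀ V) →ₗ[k] (ℤ →₀ V)) = pULin k V πW →
      ((PPUneg k V b (shift k V (-1) * (pU * pW)⁻¹) ∧ PPUneg k V b (pU * pW)) ↔
        orthoC k V b U ≤ W)) := by
  have hidem : ∀ (S : Submodule k V) (x : V), x ∈ S → x ∈ orthoC k V b S → x = 0 :=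
    fun S x hx hx' => haniso x (hx' x hx)
  have key : ∀ (S : Submodule k V) (π : V →ₗ[k] V),
      (∀ v : V, π v ∈ S ∧ v - π v ∈ orthoC k V b S) →
      ∀ x y, y ∈ S → x - y ∈ orthoC k V b S → π x = y := by
    intro S π h x y hy hxy
    refine sub_eq_zero.mp (hidem S _ (S.sub_mem (h x).1 hy) ?_)
    have := (orthoC k V b S).sub_mem hxy (h x).2
    simpa using this
  have hfix : ∀ (S : Submodule k V) (π : V →ₗ[k] V),
      (∀ v : V, π v ∈ S ∧ v - π v ∈ orthoC k V b S) → ∀ x ∈ S, π x = x := by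
    intro S π h x hx
    exact key S π h x x hx (by simp)
  have comp : orthoC k V b U ≤ W → ∀ v,
      pULin k V πU (pULin k V πW v) = pULin k V πI v := by
    intro hUW
    refine pULin_comp _ _ _ (fun x => ?_) (fun x => ?_)
    · refine (key _ πI hπI x _ ⟨(hπU _).1, ?_⟩ ?_).symm
      · have := W.sub_mem (hπW x).1 (hUW (hπU (πW x)).2)
        simpa using this
      · intro u hu
        have e : x - πU (πW x) = (x - πW x) + (πW x - πU (πW x)) := by abel
        rw [e, map_add, (hπW x).2 u hu.2, (hπU _).2 u hu.1, add_zero]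
    · set z := x - πW x with hz
      have h0 : z - πU z = 0 := by
        apply haniso
        have hzU : z - πU z ∈ orthoC k V b U := (hπU z).2
        have h1 : b (z - πU z) z = 0 := (hπW x).2 _ (hUW hzU)
        have h2 : b (z - πU z) (πU z) = 0 := by
          rw [hsymm]; exact hzU _ (hπU z).1
        rw [map_sub, h1, h2, sub_zero]
      exact (sub_eq_zero.mp h0).symm
  refine ⟨fun h => LinearMap.ext fun v => comp h v, fun pU pW hpU hpW => ?_⟩
  have hU : ∀ v, pU v = pULin k V πU v := fun v => by rw [← hpU]; rfl
  have hW : ∀ v, pW v = pULin k V πW v := fun v => by rw [← hpW]; rfl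
  constructor
  · rintro ⟨⟨-, h⟩, -⟩ x hx
    have hUx : πU x = 0 := key U πU hπU x 0 U.zero_mem (by simpa using hx)
    have hz : (pU * pW) (Finsupp.single 2 (x - πW x) + Finsupp.single 1 (πW x)) =
        Finsupp.single 0 x := by
      have e1 : πW (πW x) = πW x := hfix W πW hπW _ (hπW x).1
      rw [LinearEquiv.mul_apply, hW, hU, map_add, pULin_single, pULin_single, map_sub, e1]
      simp only [sub_self, sub_zero, Finsupp.single_zero, add_zero, zero_add]
      norm_num
      rw [pULin_single, hUx]
      simp
    have h1 := h x 1 one_pos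
    rw [LinearEquiv.mul_apply, ← hz] at h1
    have e2 : ∀ y, (pU * pW)⁻¹ ((pU * pW) y) = y := fun y =>
      (pU * pW).symm_apply_apply y
    rw [e2, map_add, shift_single, shift_single] at h1
    norm_num [Finsupp.single_apply] at h1
    rw [sub_eq_zero] at h1
    rw [h1]
    exact (hπW x).1
  · intro hUW
    have h1 : ∀ x y, b (πI x) (y - πI y) = 0 := fun x y => (hπI y).2 _ (hπI x).1
    have h2 : ∀ x y, b (x - πI x) (πI y) = 0 := fun x y => by rw [hsymm]; exact h1 y x
    have hp : ∀ v, (pU * pW) v = pULin k V πI v := fun v => by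
      rw [LinearEquiv.mul_apply, hW, hU, comp hUW]
    refine ⟨PPUneg_of_pULin b (LinearMap.id - πI) ?_ ?_ _ fun v => ?_,
      PPUneg_of_pULin b πI h1 h2 _ hp⟩
    · intro x y; simpa using h2 x y
    · intro x y; simpa using h1 x y
    · obtain ⟨w, rfl⟩ := (pU * pW).surjective v
      have e2 : (pU * pW)⁻¹ ((pU * pW) w) = w := (pU * pW).symm_apply_apply w
      rw [LinearEquiv.mul_apply, e2, hp, pULin_compl]
      exact fun x => hfix _ πI hπI _ (hπI x).1
end
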